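/- (Theorem 2) Define G_i(p,q) = {r_{i−1} − z·r_i − 1 : 0 ≤ z ≤ Z_i − 1} for 1 ≤ i ≤ t−1, and G_t(p,q) = {r_{t−1} − z·r_t − 1 : 0 ≤ z ≤ Z_t − 2} = {1, 2, ..., r_{t−1} − 1}. Then the gapset of the binary inclusion-exclusion polynomial satisfies G(p,q) = ⋃_{i=1}^{t} G_i(p,q), and its cardinality is #G(p,q) = Σ_{i=1}^{t} ⌊r_{i−1}/r_i⌋ − 1. -/

import Mathlib

/-!
Since `Q = (1 - X) * ∑ s ∈ ⟨p, q⟩, X ^ s`, the exponents of `Q` are the places where membership in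
the numerical semigroup `⟨p, q⟩` changes. The reflection `n ↦ p * q - p - q - n` exchanges the
semigroup with its complement, so runs inside and outside it have the same lengths, and the gaps of
`Q` are the `d > 0` for which `d + 1` is a difference of consecutive elements of `⟨p, q⟩`.

Such a difference is a number at most `p` that is the least positive value of `x * p - y * q`, or of
`x * q - y * p`, on a box `[0, x] × [0, y]`. For `0 < b ≤ a` these minima of the pair `(a, b)` are
`a` and those of `(a - b, b)`, so the subtractive Euclidean algorithm lists them all. The values
from different division steps lie in disjoint intervals, which gives the count.
-/

/-- The one-sided record values of `x * a - y * b`: the positive numbers that occur at the corner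
`(x, y)` of a box `[0, x] × [0, y]` as its least positive value. -/
def oneSidedMinima (a b : ℤ) : Set ℤ :=
  {d | 0 < d ∧ ∃ x y : ℤ, 0 ≤ x ∧ 0 ≤ y ∧ d = x * a - y * b ∧
    ∀ x' y' : ℤ, 0 ≤ x' → x' ≤ x → 0 ≤ y' → y' ≤ y →
      0 < x' * a - y' * b → d ≤ x' * a - y' * b}

/-- The record values of `|x * a - y * b|` for `x, y ≥ 0`, with either sign of the difference. -/
def boxMinima (a b : ℤ) : Set ℤ :=
  oneSidedMinima a b ∪ oneSidedMinima b a

section Minima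

variable {a b d : ℤ}

lemma boxMinima_comm (a b : ℤ) : boxMinima a b = boxMinima b a :=
  Set.union_comm _ _

lemma self_mem_oneSidedMinima (ha : 0 < a) : a ∈ oneSidedMinima a b := by
  refine ⟨ha, 1, 0, one_pos.le, le_rfl, by ring, fun x' y' hx' hx'1 hy' hy'0 hpos ↦ ?_⟩
  obtain rfl : y' = 0 := le_antisymm hy'0 hy'
  obtain rfl | rfl : x' = 0 ∨ x' = 1 := by omega
  · simp at hpos
  · simp

lemma le_left_of_mem_oneSidedMinima (hb : 0 ≤ b) (hd : d ∈ oneSidedMinima a b) : d ≤ a := by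
  obtain ⟨hd0, x, y, hx, hy, rfl, hmin⟩ := hd
  have hyb : 0 ≤ y * b := mul_nonneg hy hb
  have hxa : 0 < x * a := by linarith
  have ha : 0 < a := pos_of_mul_pos_right hxa hx
  have hx1 : 0 < x := pos_of_mul_pos_left hxa ha.le
  simpa using hmin 1 0 one_pos.le hx1 le_rfl hy (by simpa using ha)

lemma oneSidedMinima_zero_left (hb : 0 ≤ b) : oneSidedMinima 0 b = ∅ :=
  Set.eq_empty_of_forall_notMem fun _ hd ↦
    hd.1.not_ge (le_left_of_mem_oneSidedMinima hb hd)

lemma oneSidedMinima_zero_right (ha : 0 < a) : oneSidedMinima a 0 = {a} := by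
  refine Set.eq_singleton_iff_unique_mem.2 ⟨self_mem_oneSidedMinima ha, fun d hd ↦ ?_⟩
  refine (le_left_of_mem_oneSidedMinima le_rfl hd).antisymm ?_
  obtain ⟨hd0, x, y, -, -, rfl, -⟩ := hd
  have hxpos : 0 < x := pos_of_mul_pos_left (by linarith) ha.le
  nlinarith

-- The two `_sub` lemmas transport a box along `(x, y) ↦ (x, y - x)`, resp. `(x, y) ↦ (x - y, y)`.
lemma oneSidedMinima_sub_left (hb : 0 < b) (hba : b ≤ a) :
    oneSidedMinima a b = insert a (oneSidedMinima (a - b) b) := by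
  ext d
  constructor
  · intro hd
    have hda : d ≤ a := le_left_of_mem_oneSidedMinima hb.le hd
    obtain ⟨hd0, x, y, hx, hy, rfl, hmin⟩ := hd
    rcases le_or_gt x y with hxy | hyx
    · refine Or.inr ⟨hd0, x, y - x, hx, by omega, by ring, fun x' y' hx' hx'x hy' hy'y hpos ↦ ?_⟩
      linarith [hmin x' (y' + x') hx' hx'x (by omega) (by omega) (by linarith)]
    · exact Or.inl (hda.antisymm (by nlinarith))
  · rintro (rfl | hd)
    · exact self_mem_oneSidedMinima (by omega)
    have hdab : d ≤ a - b := le_left_of_mem_oneSidedMinima hb.le hd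
    obtain ⟨hd0, x, y, hx, hy, rfl, hmin⟩ := hd
    refine ⟨hd0, x, x + y, hx, by omega, by ring, fun x' y' hx' hx'x hy' hy'y hpos ↦ ?_⟩
    rcases lt_or_ge y' x' with hlt | hge
    · nlinarith
    rcases le_or_gt (y' - x') y with hle | hgt
    · linarith [hmin x' (y' - x') hx' hx'x (by omega) hle (by linarith)]
    · have hle : x' * (a - b) ≤ (x - 1) * (a - b) :=
        mul_le_mul_of_nonneg_right (by omega) (by omega)
      nlinarith

lemma oneSidedMinima_sub_right (hb : 0 < b) (hba : b ≤ a) :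
    oneSidedMinima b a = oneSidedMinima b (a - b) := by
  have le_of_pos {x y : ℤ} (hy : 0 ≤ y) (h : 0 < x * b - y * a) : y ≤ x := by
    by_contra! hlt
    nlinarith
  ext d
  constructor
  · rintro ⟨hd0, x, y, -, hy, rfl, hmin⟩
    refine ⟨hd0, x - y, y, by linarith [le_of_pos hy hd0], hy, by ring,
      fun x' y' hx' hx'x hy' hy'y hpos ↦ ?_⟩
    linarith [hmin (x' + y') y' (by omega) (by omega) hy' hy'y (by linarith)]
  · intro hd
    have hdb : d ≤ b := le_left_of_mem_oneSidedMinima (by omega) hd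
    obtain ⟨hd0, x, y, hx, hy, rfl, hmin⟩ := hd
    refine ⟨hd0, x + y, y, by omega, hy, by ring, fun x' y' _ _ hy' hy'y hpos ↦ ?_⟩
    have hy'x' : y' ≤ x' := le_of_pos hy' hpos
    rcases le_or_gt (x' - y') x with hle | hgt
    · linarith [hmin (x' - y') y' (by omega) hle hy' hy'y (by linarith)]
    · nlinarith

lemma boxMinima_sub_left (hb : 0 < b) (hba : b ≤ a) :
    boxMinima a b = insert a (boxMinima (a - b) b) := by
  rw [boxMinima, boxMinima, oneSidedMinima_sub_left hb hba, oneSidedMinima_sub_right hb hba,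
    Set.insert_union]

lemma boxMinima_zero_right (ha : 0 < a) : boxMinima a 0 = {a} := by
  rw [boxMinima, oneSidedMinima_zero_right ha, oneSidedMinima_zero_left ha.le, Set.union_empty]

lemma mem_boxMinima_sub_mul (hb : 0 < b) {k : ℕ} (hk : k * b ≤ a) :
    d ∈ boxMinima a b ↔ (∃ z < k, d = a - z * b) ∨ d ∈ boxMinima (a - k * b) b := by
  induction k with
  | zero => simp
  | succ k ih =>
    push_cast at hk ⊢
    have hstep : boxMinima (a - k * b) b =
        insert (a - k * b) (boxMinima (a - (k + 1) * b) b) := by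
      rw [boxMinima_sub_left hb (by linarith), sub_sub, add_one_mul]
    rw [ih (by linarith), hstep, Set.mem_insert_iff, Nat.exists_lt_succ_right, or_assoc]

lemma mem_boxMinima_le_iff_mem_boxMinima_emod (hb : 0 < b) (ha : 0 ≤ a) (hab : ¬ b ∣ a) :
    d ∈ boxMinima a b ∧ d ≤ b ↔ d ∈ boxMinima (a % b) b := by
  have hmod_pos : 0 < a % b := (Int.emod_pos_of_not_dvd hab).resolve_left hb.ne'
  have hmod_lt : a % b < b := Int.emod_lt_of_pos a hb
  lift a / b to ℕ using Int.ediv_nonneg ha hb.le with k hk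
  have hmod : a - k * b = a % b := by
    rw [hk, mul_comm, Int.emod_def]
  rw [mem_boxMinima_sub_mul hb (k := k) (by linarith), hmod]
  constructor
  · rintro ⟨⟨z, hz, rfl⟩ | hd, hle⟩
    · have : ((z : ℤ) + 1) * b ≤ k * b := by gcongr; exact_mod_cast hz
      linarith
    · exact hd
  · refine fun hd ↦ ⟨Or.inr hd, ?_⟩
    rcases hd with hd | hd
    · exact (le_left_of_mem_oneSidedMinima hb.le hd).trans hmod_lt.le
    · exact le_left_of_mem_oneSidedMinima hmod_pos.le hd

end Minima

/-- The differences of consecutive elements of `S`. For `S` the set of exponents of a polynomial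
this is the gapset of the polynomial. -/
def consecutiveGaps {α : Type*} [LT α] [Sub α] (S : Set α) : Set α :=
  {d | ∃ a b : α, a ∈ S ∧ b ∈ S ∧ a < b ∧ (∀ c ∈ S, ¬ (a < c ∧ c < b)) ∧ d = b - a}

/-- The places where membership in `S` changes. -/
def jumpSet (S : Set ℤ) : Set ℤ :=
  {n | ¬ (n ∈ S ↔ n - 1 ∈ S)}

section Gaps

variable {S : Set ℤ} {d : ℤ}

lemma mem_consecutiveGaps_iff :
    d ∈ consecutiveGaps S ↔ 0 < d ∧ ∃ s ∈ S, s + d ∈ S ∧ ∀ n, s < n → n < s + d → n ∉ S := by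
  constructor
  · rintro ⟨a, b, ha, hb, hab, hgap, rfl⟩
    exact ⟨by omega, a, ha, by simpa using hb, fun n han hnb hn ↦ hgap n hn ⟨han, by omega⟩⟩
  · rintro ⟨hd, s, hs, hsd, hgap⟩
    exact ⟨s, s + d, hs, hsd, by omega, fun n hn h ↦ hgap n h.1 h.2 hn, by ring⟩

lemma natCast_mem_consecutiveGaps_image {T : Set ℕ} {d : ℕ} :
    (d : ℤ) ∈ consecutiveGaps ((↑) '' T : Set ℤ) ↔ d ∈ consecutiveGaps T := by
  constructor
  · rintro ⟨_, _, ⟨a, ha, rfl⟩, ⟨b, hb, rfl⟩, hab, hgap, hd⟩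
    exact ⟨a, b, ha, hb, by omega, fun c hc h ↦ hgap c ⟨c, hc, rfl⟩ (by omega), by omega⟩
  · rintro ⟨a, b, ha, hb, hab, hgap, rfl⟩
    refine ⟨a, b, ⟨a, ha, rfl⟩, ⟨b, hb, rfl⟩, by omega, ?_, by omega⟩
    rintro _ ⟨c, hc, rfl⟩ h
    exact hgap c hc (by omega)

lemma mem_iff_of_forall_notMem_jumpSet {a b n : ℤ}
    (hgap : ∀ c ∈ jumpSet S, ¬ (a < c ∧ c < b)) (han : a ≤ n) (hnb : n < b) :
    n ∈ S ↔ a ∈ S := by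
  induction n, han using Int.leInduction with
  | base => rfl
  | succ n han ih =>
    rw [← ih (by omega)]
    by_contra h
    exact hgap (n + 1) (by simpa [jumpSet] using h) ⟨by omega, hnb⟩

-- A maximal run outside `S` is a gap of `S`; reflection turns a maximal run inside `S` into one.
lemma mem_consecutiveGaps_jumpSet_iff {m : ℤ} (hS : ∀ n, m - n ∈ S ↔ n ∉ S) :
    d ∈ consecutiveGaps (jumpSet S) ↔ 0 < d ∧ d + 1 ∈ consecutiveGaps S := by
  rw [mem_consecutiveGaps_iff (S := S)]
  constructor
  · rintro ⟨a, b, ha, hb, hab, hgap, rfl⟩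
    have hrun (n : ℤ) (han : a ≤ n) (hnb : n < b) : n ∈ S ↔ a ∈ S :=
      mem_iff_of_forall_notMem_jumpSet hgap han hnb
    simp only [jumpSet, Set.mem_ofPred_eq] at ha hb
    rw [hrun (b - 1) (by omega) (by omega)] at hb
    refine ⟨by omega, by omega, ?_⟩
    by_cases haS : a ∈ S
    · refine ⟨m - b, (hS b).2 (by tauto), ?_, fun n hn hn' hnS ↦ ?_⟩
      · convert (hS (a - 1)).2 (by tauto) using 1
        ring
      · exact (hS n).1 ((hrun (m - n) (by omega) (by omega)).2 haS) hnS
    · refine ⟨a - 1, by tauto, ?_, fun n hn hn' ↦ ?_⟩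
      · convert (show b ∈ S by tauto) using 1
        ring
      · rwa [hrun n (by omega) (by omega)]
  · rintro ⟨hd, -, s, hs, hsd, hgap⟩
    refine ⟨s + 1, s + (d + 1), ?_, ?_, by omega, ?_, by ring⟩
    · have : s + 1 ∉ S := hgap _ (by omega) (by omega)
      simp [jumpSet, hs, this]
    · have : s + (d + 1) - 1 ∉ S := hgap _ (by omega) (by omega)
      simp [jumpSet, hsd, this]
    · rintro c hc ⟨hsc, hcd⟩
      have : c ∉ S := hgap c (by omega) (by omega)
      have : c - 1 ∉ S := hgap (c - 1) (by omega) (by omega)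
      simp_all [jumpSet]

end Gaps

/-- The additive submonoid `⟨p, q⟩` of `ℤ`. For coprime positive `p` and `q` it is a numerical
semigroup; it is placed in `ℤ` so that it can be reflected without truncated subtraction. -/
def pairSemigroup (p q : ℤ) : AddSubmonoid ℤ :=
  AddSubmonoid.closure {p, q}

section Semigroup

variable {p q : ℤ}

lemma mem_pairSemigroup {n : ℤ} :
    n ∈ pairSemigroup p q ↔ ∃ x y : ℤ, 0 ≤ x ∧ 0 ≤ y ∧ n = x * p + y * q := by
  simp only [pairSemigroup, AddSubmonoid.mem_closure_pair, nsmul_eq_mul]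
  constructor
  · rintro ⟨x, y, rfl⟩
    exact ⟨x, y, by positivity, by positivity, rfl⟩
  · rintro ⟨x, y, hx, hy, rfl⟩
    lift x to ℕ using hx
    lift y to ℕ using hy
    exact ⟨x, y, rfl⟩

lemma pairSemigroup_comm (p q : ℤ) : pairSemigroup p q = pairSemigroup q p := by
  rw [pairSemigroup, pairSemigroup, Set.pair_comm]

lemma nonneg_of_mem_pairSemigroup (hp : 0 ≤ p) (hq : 0 ≤ q) {n : ℤ}
    (hn : n ∈ pairSemigroup p q) : 0 ≤ n := by
  obtain ⟨x, y, hx, hy, rfl⟩ := mem_pairSemigroup.1 hn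
  positivity

lemma mem_oneSidedMinima_of_gap {s d x y u v : ℤ} (hx : 0 ≤ x) (hv : 0 ≤ v) (hxu : x ≤ u)
    (hvy : v ≤ y) (hs : s = x * p + y * q) (hsd : s + d = u * p + v * q) (hd : 0 < d)
    (hgap : ∀ n, s < n → n < s + d → n ∉ pairSemigroup p q) :
    d ∈ oneSidedMinima p q := by
  refine ⟨hd, u - x, y - v, by omega, by omega, by linarith,
    fun x' y' hx' _ _ hy'y hpos ↦ ?_⟩
  by_contra! hlt
  exact hgap (s + (x' * p - y' * q)) (by omega) (by omega)
    (mem_pairSemigroup.2 ⟨x + x', y - y', by omega, by omega, by rw [hs]; ring⟩)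

lemma mem_consecutiveGaps_of_mem_oneSidedMinima (hp : 0 < p) (hq : 0 < q) {d : ℤ} (hdq : d ≤ q)
    (hd : d ∈ oneSidedMinima p q) : d ∈ consecutiveGaps (pairSemigroup p q : Set ℤ) := by
  obtain ⟨hd0, x, y, hx, hy, hdxy, hmin⟩ := hd
  refine mem_consecutiveGaps_iff.2 ⟨hd0, y * q, mem_pairSemigroup.2 ⟨0, y, le_rfl, hy, by ring⟩,
    mem_pairSemigroup.2 ⟨x, 0, hx, le_rfl, by rw [hdxy]; ring⟩, fun n hn hn' hnS ↦ ?_⟩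
  obtain ⟨u, v, hu, hv, rfl⟩ := mem_pairSemigroup.1 hnS
  have hvy : v ≤ y := by
    by_contra! hlt
    nlinarith
  have hux : u ≤ x := by
    by_contra! hlt
    nlinarith
  linarith [hmin u (y - v) hu hux (by omega) (by omega) (by linarith)]

lemma mem_consecutiveGaps_pairSemigroup_iff (hp : 0 < p) (hpq : p < q) {d : ℤ} :
    d ∈ consecutiveGaps (pairSemigroup p q : Set ℤ) ↔ d ∈ boxMinima p q ∧ d ≤ p := by
  constructor
  · intro hd
    obtain ⟨hd0, s, hs, hsd, hgap⟩ := mem_consecutiveGaps_iff.1 hd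
    obtain ⟨x, y, hx, hy, hsxy⟩ := mem_pairSemigroup.1 hs
    obtain ⟨u, v, hu, hv, hsduv⟩ := mem_pairSemigroup.1 hsd
    have hdp : d ≤ p := by
      by_contra! hlt
      exact hgap (s + p) (by omega) (by omega)
        (add_mem hs (AddSubmonoid.subset_closure (Set.mem_insert p {q})))
    refine ⟨?_, hdp⟩
    rcases le_or_gt v y with hvy | hyv
    · have hxu : x ≤ u := by
        by_contra! hlt
        nlinarith
      exact Or.inl (mem_oneSidedMinima_of_gap hx hv hxu hvy hsxy hsduv hd0 hgap)
    · have hux : u ≤ x := by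
        by_contra! hlt
        nlinarith
      rw [pairSemigroup_comm] at hgap
      exact Or.inr (mem_oneSidedMinima_of_gap hy hu hyv.le hux (by rw [hsxy, add_comm])
        (by rw [hsduv, add_comm]) hd0 hgap)
  · rintro ⟨hd | hd, hdp⟩
    · exact mem_consecutiveGaps_of_mem_oneSidedMinima hp (hp.trans hpq) (hdp.trans hpq.le) hd
    · rw [pairSemigroup_comm]
      exact mem_consecutiveGaps_of_mem_oneSidedMinima (hp.trans hpq) hp hdp hd

lemma exists_eq_mul_add_mul_of_isCoprime (hp : 0 < p) (hpq : IsCoprime p q) (n : ℤ) :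
    ∃ x y : ℤ, 0 ≤ y ∧ y < p ∧ n = x * p + y * q := by
  obtain ⟨a, b, hab⟩ := hpq
  refine ⟨n * a + n * b / p * q, n * b % p, Int.emod_nonneg _ hp.ne', Int.emod_lt_of_pos _ hp, ?_⟩
  linear_combination -n * hab - q * Int.emod_add_mul_ediv (n * b) p

lemma mul_add_mul_mem_pairSemigroup_iff (hq : 0 ≤ q) (hpq : IsCoprime p q) {x y : ℤ}
    (hy : 0 ≤ y) (hyp : y < p) : x * p + y * q ∈ pairSemigroup p q ↔ 0 ≤ x := by
  refine ⟨fun h ↦ ?_, fun hx ↦ mem_pairSemigroup.2 ⟨x, y, hx, hy, rfl⟩⟩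
  have hp : 0 < p := hy.trans_lt hyp
  obtain ⟨u, v, hu, hv, huv⟩ := mem_pairSemigroup.1 h
  obtain ⟨k, hk⟩ : p ∣ y - v := hpq.dvd_of_dvd_mul_right ⟨u - x, by linarith⟩
  have hk0 : k ≤ 0 := by
    by_contra! hlt
    nlinarith
  have hx : x = u - k * q := by
    apply mul_right_cancel₀ hp.ne'
    linear_combination huv - q * hk
  nlinarith

lemma sub_mem_pairSemigroup_iff (hp : 0 < p) (hq : 0 ≤ q) (hpq : IsCoprime p q) (n : ℤ) :
    p * q - p - q - n ∈ pairSemigroup p q ↔ n ∉ pairSemigroup p q := by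
  obtain ⟨x, y, hy, hyp, rfl⟩ := exists_eq_mul_add_mul_of_isCoprime hp hpq n
  have hreflect : p * q - p - q - (x * p + y * q) = (-1 - x) * p + (p - 1 - y) * q := by ring
  rw [hreflect, mul_add_mul_mem_pairSemigroup_iff hq hpq (by omega) (by omega),
    mul_add_mul_mem_pairSemigroup_iff hq hpq hy hyp]
  omega

-- The Apéry set of `⟨p, q⟩` with respect to `p`.
lemma mem_and_sub_notMem_pairSemigroup_iff (hp : 0 < p) (hq : 0 ≤ q) (hpq : IsCoprime p q)
    {n : ℤ} : n ∈ pairSemigroup p q ∧ n - p ∉ pairSemigroup p q ↔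
      ∃ j : ℤ, 0 ≤ j ∧ j < p ∧ n = j * q := by
  have hiff {x y : ℤ} (hy : 0 ≤ y) (hyp : y < p) : x * p + y * q ∈ pairSemigroup p q ∧
      x * p + y * q - p ∉ pairSemigroup p q ↔ x = 0 := by
    have hsub : x * p + y * q - p = (x - 1) * p + y * q := by ring
    rw [hsub, mul_add_mul_mem_pairSemigroup_iff hq hpq hy hyp,
      mul_add_mul_mem_pairSemigroup_iff hq hpq hy hyp]
    omega
  constructor
  · obtain ⟨x, y, hy, hyp, rfl⟩ := exists_eq_mul_add_mul_of_isCoprime hp hpq n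
    rw [hiff hy hyp]
    rintro rfl
    exact ⟨y, hy, hyp, by ring⟩
  · rintro ⟨j, hj, hjp, rfl⟩
    simpa using (hiff (x := 0) hj hjp).2 rfl

end Semigroup

section InclusionExclusionPolynomial

open PowerSeries

variable {R : Type*} [CommRing R]

/-- The generating function of the nonnegative elements of `S`. -/
noncomputable def indicatorSeries (R : Type*) [CommRing R] (S : Set ℤ) : R⟦X⟧ :=
  PowerSeries.mk fun n ↦ S.indicator 1 (n : ℤ)

lemma coeff_indicatorSeries_mul_one_sub_X_pow {S : Set ℤ} (hS : ∀ n ∈ S, 0 ≤ n) (k n : ℕ) :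
    coeff n (indicatorSeries R S * (1 - X ^ k)) =
      S.indicator 1 (n : ℤ) - S.indicator 1 ((n : ℤ) - k) := by
  rw [mul_sub, mul_one, map_sub, coeff_mul_X_pow', indicatorSeries, coeff_mk, coeff_mk]
  split_ifs with hkn
  · rw [Nat.cast_sub hkn]
  · have hnot : (n : ℤ) - k ∉ S := fun h ↦ by have := hS _ h; omega
    rw [Set.indicator_of_notMem hnot]

variable {p q : ℕ}

lemma indicatorSeries_pairSemigroup_mul_one_sub_X_pow (hp : 0 < p) (hq : 0 < q)
    (hpq : p.Coprime q) :
    indicatorSeries R (pairSemigroup p q) * (1 - X ^ p) = ∑ j ∈ Finset.range p, (X ^ q) ^ j := by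
  ext n
  have hapery := mem_and_sub_notMem_pairSemigroup_iff (n := n) (Nat.cast_pos.2 hp)
    (Int.natCast_nonneg q) (Nat.isCoprime_iff_coprime.2 hpq)
  have hadd (h : (n : ℤ) - p ∈ pairSemigroup p q) : (n : ℤ) ∈ pairSemigroup p q := by
    simpa using add_mem h (AddSubmonoid.subset_closure (Set.mem_insert (p : ℤ) {(q : ℤ)}))
  have hmem : (∃ j : ℤ, 0 ≤ j ∧ j < p ∧ (n : ℤ) = j * q) ↔
      n ∈ (Finset.range p).image (q * ·) := by
    simp only [Finset.mem_image, Finset.mem_range]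
    constructor
    · rintro ⟨j, hj, hjp, hn⟩
      lift j to ℕ using hj
      exact ⟨j, by omega, by rw [mul_comm]; exact_mod_cast hn.symm⟩
    · rintro ⟨j, hjp, rfl⟩
      exact ⟨j, by omega, by omega, by push_cast; ring⟩
  have hsum : ∑ j ∈ Finset.range p, (X ^ q : R⟦X⟧) ^ j =
      ∑ m ∈ (Finset.range p).image (q * ·), X ^ m := by
    rw [Finset.sum_image fun _ _ _ _ h ↦ Nat.eq_of_mul_eq_mul_left hq h]
    exact Finset.sum_congr rfl fun j _ ↦ (pow_mul _ _ _).symm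
  rw [coeff_indicatorSeries_mul_one_sub_X_pow fun n ↦
    nonneg_of_mem_pairSemigroup (Int.natCast_nonneg p) (Int.natCast_nonneg q), hsum, map_sum]
  simp only [coeff_X_pow, Finset.sum_ite_eq, ← hmem, ← hapery]
  by_cases hn : (n : ℤ) ∈ pairSemigroup p q <;>
    by_cases hnp : (n : ℤ) - p ∈ pairSemigroup p q <;>
    simp_all [Set.indicator]

lemma isUnit_one_sub_X_pow {k : ℕ} (hk : 0 < k) : IsUnit (1 - X ^ k : R⟦X⟧) :=
  isUnit_iff_constantCoeff.2 (by simp [hk.ne'])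

lemma coe_eq_indicatorSeries_mul_one_sub_X (hp : 0 < p) (hq : 0 < q) (hpq : p.Coprime q)
    {Q : Polynomial R} (hQ : Q * ((1 - Polynomial.X ^ p) * (1 - Polynomial.X ^ q)) =
      (1 - Polynomial.X ^ (p * q)) * (1 - Polynomial.X)) :
    (Q : R⟦X⟧) = indicatorSeries R (pairSemigroup p q) * (1 - X) := by
  have hseries := congrArg (Polynomial.coeToPowerSeries.ringHom (R := R)) hQ
  simp only [map_mul, map_sub, map_one, map_pow, Polynomial.coeToPowerSeries.ringHom_apply,
    Polynomial.coe_X] at hseries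
  have hhilbert : indicatorSeries R (pairSemigroup p q) * (1 - X ^ p) * (1 - X ^ q) =
      1 - X ^ (p * q) := by
    rw [indicatorSeries_pairSemigroup_mul_one_sub_X_pow hp hq hpq, geom_sum_mul_neg, ← pow_mul,
      mul_comm q p]
  apply ((isUnit_one_sub_X_pow hp).mul (isUnit_one_sub_X_pow hq)).mul_right_cancel
  rw [hseries, ← hhilbert]
  ring

lemma image_natCast_support_eq_jumpSet [Nontrivial R] (hp : 0 < p) (hq : 0 < q)
    (hpq : p.Coprime q) {Q : Polynomial R}
    (hQ : Q * ((1 - Polynomial.X ^ p) * (1 - Polynomial.X ^ q)) =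
      (1 - Polynomial.X ^ (p * q)) * (1 - Polynomial.X)) :
    ((↑) '' (Q.support : Set ℕ) : Set ℤ) = jumpSet (pairSemigroup p q) := by
  have hnonneg : ∀ n ∈ (pairSemigroup p q : Set ℤ), 0 ≤ n := fun n ↦
    nonneg_of_mem_pairSemigroup (Int.natCast_nonneg p) (Int.natCast_nonneg q)
  have hsupport (n : ℕ) : n ∈ Q.support ↔ (n : ℤ) ∈ jumpSet (pairSemigroup p q) := by
    have hcoeff := coeff_indicatorSeries_mul_one_sub_X_pow (R := R) hnonneg 1 n
    rw [pow_one, ← coe_eq_indicatorSeries_mul_one_sub_X hp hq hpq hQ, Polynomial.coeff_coe]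
      at hcoeff
    rw [Polynomial.mem_support_iff, hcoeff, jumpSet, Set.mem_ofPred_eq]
    by_cases hn : (n : ℤ) ∈ pairSemigroup p q <;>
      by_cases hn' : (n : ℤ) - 1 ∈ pairSemigroup p q <;>
      simp [hn, hn']
  ext n
  constructor
  · rintro ⟨m, hm, rfl⟩
    exact (hsupport m).1 hm
  · intro hn
    have hn0 : 0 ≤ n := by
      by_contra! hlt
      exact hn (iff_of_false (fun h ↦ hlt.not_ge (hnonneg _ h))
        fun h ↦ by have := hnonneg _ h; omega)
    lift n to ℕ using hn0
    exact ⟨n, (hsupport n).2 hn, rfl⟩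

theorem mem_consecutiveGaps_support_iff [Nontrivial R] (hp : 1 < p) (hpq : p < q)
    (hcop : p.Coprime q) {Q : Polynomial R}
    (hQ : Q * ((1 - Polynomial.X ^ p) * (1 - Polynomial.X ^ q)) =
      (1 - Polynomial.X ^ (p * q)) * (1 - Polynomial.X)) {d : ℕ} :
    d ∈ consecutiveGaps (Q.support : Set ℕ) ↔
      0 < d ∧ ((d + 1 : ℕ) : ℤ) ∈ boxMinima p (q % p : ℕ) := by
  have hp0 : 0 < p := by omega
  have hndvd : ¬ (p : ℤ) ∣ q := by
    rw [Int.natCast_dvd_natCast]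
    exact fun h ↦ hp.ne' (hcop.eq_one_of_dvd h)
  rw [← natCast_mem_consecutiveGaps_image,
    image_natCast_support_eq_jumpSet hp0 (hp0.trans hpq) hcop hQ,
    mem_consecutiveGaps_jumpSet_iff (sub_mem_pairSemigroup_iff (Nat.cast_pos.2 hp0)
      (Int.natCast_nonneg q) (Nat.isCoprime_iff_coprime.2 hcop)),
    mem_consecutiveGaps_pairSemigroup_iff (Nat.cast_pos.2 hp0) (Nat.cast_lt.2 hpq),
    boxMinima_comm, mem_boxMinima_le_iff_mem_boxMinima_emod (Nat.cast_pos.2 hp0)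
      (Int.natCast_nonneg q) hndvd, boxMinima_comm]
  simp

end InclusionExclusionPolynomial

lemma ncard_setOf_pos_and_succ_mem_finset {T : Finset ℕ} (h0 : 0 ∉ T) (h1 : 1 ∈ T) :
    {d | 0 < d ∧ d + 1 ∈ T}.ncard = T.card - 1 := by
  have himage : Nat.succ '' {d | 0 < d ∧ d + 1 ∈ T} = (T.erase 1 : Finset ℕ) := by
    ext (_ | n)
    · simp [h0]
    · simp [Nat.pos_iff_ne_zero, and_comm]
  rw [← Set.ncard_image_of_injective _ Nat.succ_injective, himage, Set.ncard_coe_finset,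
    Finset.card_erase_of_mem h1]

/-- The Euclidean algorithm, started at `r 0 > r 1`: `r i` are the remainders, `Z i` the quotients,
and `r t` is the last nonzero remainder. -/
structure IsEuclideanChain (r Z : ℕ → ℕ) (t : ℕ) : Prop where
  succ_lt : ∀ i ≤ t, r (i + 1) < r i
  eq_add : ∀ i, 1 ≤ i → i ≤ t → r (i - 1) = Z i * r i + r (i + 1)
  last : r (t + 1) = 0

/-- The numbers met when the `i`-th division of a Euclidean chain is carried out by repeated
subtraction, without its final remainder. The paper's `G_i` is this set shifted down by one, with
`0` left out for `i = t`. -/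
def stepRemainders (r Z : ℕ → ℕ) (i : ℕ) : Finset ℕ :=
  (Finset.range (Z i)).image fun z ↦ r (i - 1) - z * r i

namespace IsEuclideanChain

variable {r Z : ℕ → ℕ} {t i j d : ℕ}

lemma strictAntiOn (h : IsEuclideanChain r Z t) : StrictAntiOn r (Set.Iic (t + 1)) :=
  strictAntiOn_Iic_of_succ_lt fun i hi ↦ h.succ_lt i (by omega)

lemma remainder_pos (h : IsEuclideanChain r Z t) (hi : i ≤ t) : 0 < r i :=
  (Nat.zero_le _).trans_lt (h.succ_lt i hi)

lemma quotient_pos (h : IsEuclideanChain r Z t) (hi : 1 ≤ i) (hit : i ≤ t) : 0 < Z i := by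
  by_contra! hZ
  have heq := h.eq_add i hi hit
  rw [Nat.le_zero.1 hZ, zero_mul, zero_add] at heq
  exact absurd (h.strictAntiOn (by simp; omega) (by simp; omega) (show i - 1 < i + 1 by omega))
    heq.not_gt

lemma div_eq_quotient (h : IsEuclideanChain r Z t) (hi : 1 ≤ i) (hit : i ≤ t) :
    r (i - 1) / r i = Z i := by
  rw [h.eq_add i hi hit, mul_comm, Nat.mul_add_div (h.remainder_pos hit),
    Nat.div_eq_of_lt (h.succ_lt i hit), add_zero]

lemma mul_add_add_le (h : IsEuclideanChain r Z t) (hi : 1 ≤ i) (hit : i ≤ t) {z : ℕ}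
    (hz : z < Z i) : z * r i + r i + r (i + 1) ≤ r (i - 1) := by
  rw [h.eq_add i hi hit, ← Nat.succ_mul]
  gcongr
  exact hz

lemma mem_stepRemainders_iff (h : IsEuclideanChain r Z t) (hi : 1 ≤ i) (hit : i ≤ t) :
    d ∈ stepRemainders r Z i ↔ ∃ z < Z i, (d : ℤ) = r (i - 1) - z * r i := by
  simp only [stepRemainders, Finset.mem_image, Finset.mem_range]
  refine exists_congr fun z ↦ and_congr_right fun hz ↦ ?_
  have hle := h.mul_add_add_le hi hit hz
  rw [← Nat.cast_mul]
  omega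

lemma stepRemainders_subset_Icc (h : IsEuclideanChain r Z t) (hi : 1 ≤ i) (hit : i ≤ t) :
    stepRemainders r Z i ⊆ Finset.Icc (r i + r (i + 1)) (r (i - 1)) := by
  intro d hd
  obtain ⟨z, hz, rfl⟩ := Finset.mem_image.1 hd
  have hle := h.mul_add_add_le hi hit (Finset.mem_range.1 hz)
  rw [Finset.mem_Icc]
  omega

lemma card_stepRemainders (h : IsEuclideanChain r Z t) (hi : 1 ≤ i) (hit : i ≤ t) :
    (stepRemainders r Z i).card = Z i := by
  rw [stepRemainders, Finset.card_image_of_injOn, Finset.card_range]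
  intro z hz w hw hzw
  simp only [Finset.coe_range, Set.mem_Iio] at hz hw hzw
  have hzle := h.mul_add_add_le hi hit hz
  have hwle := h.mul_add_add_le hi hit hw
  exact Nat.eq_of_mul_eq_mul_right (h.remainder_pos hit) (by omega)

lemma disjoint_stepRemainders (h : IsEuclideanChain r Z t) (hi : 1 ≤ i) (hij : i < j)
    (hjt : j ≤ t) : Disjoint (stepRemainders r Z i) (stepRemainders r Z j) := by
  rw [Finset.disjoint_left]
  intro d hdi hdj
  have hdi' := Finset.mem_Icc.1 (h.stepRemainders_subset_Icc hi (by omega) hdi)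
  have hdj' := Finset.mem_Icc.1 (h.stepRemainders_subset_Icc (by omega) hjt hdj)
  have hpos : 0 < r (i + 1) := h.remainder_pos (by omega)
  have hle : r (j - 1) ≤ r i :=
    h.strictAntiOn.antitoneOn (by simp; omega) (by simp; omega) (by omega)
  omega

lemma card_biUnion_stepRemainders (h : IsEuclideanChain r Z t) :
    ((Finset.Icc 1 t).biUnion (stepRemainders r Z)).card =
      ∑ i ∈ Finset.Icc 1 t, r (i - 1) / r i := by
  rw [Finset.card_biUnion]
  · refine Finset.sum_congr rfl fun i hi ↦ ?_
    rw [Finset.mem_Icc] at hi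
    rw [h.card_stepRemainders hi.1 hi.2, h.div_eq_quotient hi.1 hi.2]
  · intro i hi j hj hij
    simp only [Finset.coe_Icc, Set.mem_Icc] at hi hj
    rcases Nat.lt_or_gt_of_ne hij with hlt | hgt
    · exact h.disjoint_stepRemainders hi.1 hlt hj.2
    · exact (h.disjoint_stepRemainders hj.1 hgt hi.2).symm

lemma mem_boxMinima_iff_eq_last_or_exists (h : IsEuclideanChain r Z t) (hi : i ≤ t) :
    (d : ℤ) ∈ boxMinima (r i) (r (i + 1)) ↔
      d = r t ∨ ∃ j ∈ Finset.Ioc i t, d ∈ stepRemainders r Z j := by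
  induction hi using Nat.decreasingInduction with
  | self =>
    rw [h.last, Nat.cast_zero, boxMinima_zero_right (by exact_mod_cast h.remainder_pos le_rfl)]
    simp
  | of_succ i hi ih =>
    have heq : r i = Z (i + 1) * r (i + 1) + r (i + 1 + 1) := h.eq_add (i + 1) (by omega) hi
    have hrem : (r i : ℤ) - Z (i + 1) * r (i + 1) = r (i + 1 + 1) := by rw [heq]; push_cast; ring
    have hIoc : Finset.Ioc i t = insert (i + 1) (Finset.Ioc (i + 1) t) := by
      ext j
      simp only [Finset.mem_Ioc, Finset.mem_insert]
      omega
    have hstep : d ∈ stepRemainders r Z (i + 1) ↔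
        ∃ z < Z (i + 1), (d : ℤ) = r i - z * r (i + 1) :=
      h.mem_stepRemainders_iff (by omega) hi
    rw [mem_boxMinima_sub_mul (k := Z (i + 1)) (by exact_mod_cast h.remainder_pos hi)
      (by linarith), hrem, boxMinima_comm, ih, hIoc, Finset.exists_mem_insert, hstep,
      or_left_comm]

lemma last_mem_stepRemainders (h : IsEuclideanChain r Z t) (ht : 1 ≤ t) :
    r t ∈ stepRemainders r Z t := by
  have hZ := h.quotient_pos ht le_rfl
  refine (h.mem_stepRemainders_iff ht le_rfl).2 ⟨Z t - 1, by omega, ?_⟩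
  rw [h.eq_add t ht le_rfl, h.last]
  push_cast [hZ]
  ring

theorem mem_boxMinima_iff (h : IsEuclideanChain r Z t) (ht : 1 ≤ t) :
    (d : ℤ) ∈ boxMinima (r 0) (r 1) ↔ d ∈ (Finset.Icc 1 t).biUnion (stepRemainders r Z) := by
  rw [h.mem_boxMinima_iff_eq_last_or_exists t.zero_le, Finset.mem_biUnion]
  refine or_iff_right_of_imp ?_
  rintro rfl
  exact ⟨t, Finset.mem_Ioc.2 ⟨ht, le_rfl⟩, h.last_mem_stepRemainders ht⟩

lemma quotient_last (h : IsEuclideanChain r Z t) (ht : 1 ≤ t) (hrt : r t = 1) :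
    Z t = r (t - 1) := by
  rw [h.eq_add t ht le_rfl, h.last, hrt, mul_one, add_zero]

lemma setOf_succ_mem_stepRemainders (h : IsEuclideanChain r Z t) (hi : 1 ≤ i) (hit : i ≤ t) :
    {d | d + 1 ∈ stepRemainders r Z i} =
      {d | ∃ z : ℕ, z ≤ Z i - 1 ∧ d = r (i - 1) - z * r i - 1} := by
  ext d
  simp only [stepRemainders, Finset.mem_image, Finset.mem_range, Set.mem_ofPred_eq]
  have hZ := h.quotient_pos hi hit
  have hpos := h.remainder_pos hit
  have hlt {z : ℕ} : z < Z i ↔ z ≤ Z i - 1 := by omega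
  refine exists_congr fun z ↦ (and_congr_right fun hz ↦ ?_).trans (and_congr_left' hlt)
  have hle := h.mul_add_add_le hi hit hz
  omega

lemma setOf_last_step_eq_Icc (h : IsEuclideanChain r Z t) (ht : 1 ≤ t) (hrt : r t = 1) :
    {d | ∃ z : ℕ, z ≤ Z t - 2 ∧ d = r (t - 1) - z * r t - 1} = Set.Icc 1 (r (t - 1) - 1) := by
  have hlt := h.succ_lt (t - 1) (by omega)
  rw [Nat.sub_add_cancel ht] at hlt
  ext d
  simp only [h.quotient_last ht hrt, hrt, mul_one, Set.mem_ofPred_eq, Set.mem_Icc]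
  constructor
  · rintro ⟨z, hz, rfl⟩
    omega
  · rintro ⟨hd, hdr⟩
    exact ⟨r (t - 1) - 1 - d, by omega, by omega⟩

lemma stepRemainders_last_eq_Icc (h : IsEuclideanChain r Z t) (ht : 1 ≤ t) (hrt : r t = 1) :
    stepRemainders r Z t = Finset.Icc 1 (r (t - 1)) := by
  refine Finset.eq_of_subset_of_card_le ?_ ?_
  · simpa [hrt, h.last] using h.stepRemainders_subset_Icc ht le_rfl
  · simp [h.card_stepRemainders ht le_rfl, h.quotient_last ht hrt]

lemma setOf_pos_and_succ_mem_biUnion_stepRemainders (h : IsEuclideanChain r Z t) (ht : 1 ≤ t)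
    (hrt : r t = 1) :
    {d | 0 < d ∧ d + 1 ∈ (Finset.Icc 1 t).biUnion (stepRemainders r Z)} =
      (⋃ i ∈ Set.Icc 1 (t - 1), {d | d + 1 ∈ stepRemainders r Z i}) ∪
        Set.Icc 1 (r (t - 1) - 1) := by
  have hIcc : Finset.Icc 1 t = insert t (Finset.Icc 1 (t - 1)) := by
    ext j
    simp only [Finset.mem_Icc, Finset.mem_insert]
    omega
  have hpos {i : ℕ} (hi : 1 ≤ i ∧ i ≤ t - 1) {d : ℕ} (hd : d + 1 ∈ stepRemainders r Z i) :
      0 < d := by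
    have hdi := Finset.mem_Icc.1 (h.stepRemainders_subset_Icc hi.1 (by omega) hd)
    have hri : 0 < r i := h.remainder_pos (by omega)
    have hri' : 0 < r (i + 1) := h.remainder_pos (by omega)
    omega
  ext d
  simp only [hIcc, Finset.biUnion_insert, h.stepRemainders_last_eq_Icc ht hrt, Finset.mem_union,
    Finset.mem_biUnion, Finset.mem_Icc, Set.mem_union, Set.mem_iUnion, Set.mem_ofPred_eq,
    Set.mem_Icc, exists_prop]
  constructor
  · rintro ⟨hd, hlast | hstep⟩
    · exact Or.inr (by omega)
    · exact Or.inl hstep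
  · rintro (⟨i, hi, hd⟩ | hd)
    · exact ⟨hpos hi hd, Or.inr ⟨i, hi, hd⟩⟩
    · exact ⟨hd.1, Or.inl (by omega)⟩

lemma ncard_setOf_pos_and_succ_mem (h : IsEuclideanChain r Z t) (ht : 1 ≤ t) (hrt : r t = 1) :
    {d | 0 < d ∧ d + 1 ∈ (Finset.Icc 1 t).biUnion (stepRemainders r Z)}.ncard =
      (∑ i ∈ Finset.Icc 1 t, r (i - 1) / r i) - 1 := by
  rw [← h.card_biUnion_stepRemainders]
  refine ncard_setOf_pos_and_succ_mem_finset ?_ ?_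
  · rw [Finset.mem_biUnion]
    rintro ⟨i, hi, hmem⟩
    rw [Finset.mem_Icc] at hi
    have hle := (Finset.mem_Icc.1 (h.stepRemainders_subset_Icc hi.1 hi.2 hmem)).1
    have hri := h.remainder_pos hi.2
    omega
  · refine Finset.mem_biUnion.2 ⟨t, Finset.mem_Icc.2 ⟨ht, le_rfl⟩, ?_⟩
    simpa [hrt] using h.last_mem_stepRemainders ht

end IsEuclideanChain

open Polynomial in
theorem stmt_18_general {R : Type*} [CommRing R] [Nontrivial R] (p q : ℕ) (hp : 0 < p)
    (hpq : p < q) (hcop : Nat.Coprime p q) (Q : Polynomial R)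
    (hQ : Q * ((1 - X ^ p) * (1 - X ^ q)) = (1 - X ^ (p * q)) * (1 - X))
    (t : ℕ) (ht : 1 ≤ t) (r Z : ℕ → ℕ) (hr0 : r 0 = p) (hr1 : r 1 = q % p)
    (hrec : ∀ i, 1 ≤ i → i ≤ t → r (i - 1) = Z i * r i + r (i + 1) ∧ r (i + 1) < r i)
    (hrt : r t = 1) :
    consecutiveGaps (Q.support : Set ℕ) =
      (⋃ i ∈ Set.Icc 1 (t - 1),
        {d : ℕ | ∃ z : ℕ, z ≤ Z i - 1 ∧ d = r (i - 1) - z * r i - 1}) ∪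
      {d : ℕ | ∃ z : ℕ, z ≤ Z t - 2 ∧ d = r (t - 1) - z * r t - 1} ∧
    {d : ℕ | ∃ z : ℕ, z ≤ Z t - 2 ∧ d = r (t - 1) - z * r t - 1} =
      Set.Icc 1 (r (t - 1) - 1) ∧
    (consecutiveGaps (Q.support : Set ℕ)).ncard =
      (∑ i ∈ Finset.Icc 1 t, r (i - 1) / r i) - 1 := by
  have hchain : IsEuclideanChain r Z t :=
    { succ_lt := by
        rintro (_ | i) hi
        · rw [zero_add, hr0, hr1]
          exact Nat.mod_lt q hp
        · exact (hrec (i + 1) (by omega) hi).2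
      eq_add := fun i hi hit ↦ (hrec i hi hit).1
      last := by have := (hrec t ht le_rfl).2; omega }
  have hp1 : 1 < p := by
    rw [← hr0]
    exact (Nat.succ_le_of_lt (hchain.remainder_pos ht)).trans_lt (hchain.succ_lt 0 t.zero_le)
  have hgaps : consecutiveGaps (Q.support : Set ℕ) =
      {d | 0 < d ∧ d + 1 ∈ (Finset.Icc 1 t).biUnion (stepRemainders r Z)} := by
    ext d
    rw [mem_consecutiveGaps_support_iff hp1 hpq hcop hQ, ← hr1, ← hr0,
      hchain.mem_boxMinima_iff ht, Set.mem_ofPred_eq]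
  rw [hgaps]
  refine ⟨?_, hchain.setOf_last_step_eq_Icc ht hrt, hchain.ncard_setOf_pos_and_succ_mem ht hrt⟩
  rw [hchain.setOf_pos_and_succ_mem_biUnion_stepRemainders ht hrt,
    hchain.setOf_last_step_eq_Icc ht hrt]
  congr 1
  exact Set.iUnion₂_congr fun i hi ↦
    hchain.setOf_succ_mem_stepRemainders hi.1 (hi.2.trans (Nat.sub_le t 1))

open Polynomial in
/-- Theorem 2: the gapset `G(p,q)` of the binary inclusion–exclusion polynomial
`Q_{p,q}` (gaps between consecutive exponents occurring in `Q_{p,q}`) equals the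
union `⋃_{i=1}^t G_i(p,q)`, where `G_i(p,q) = {r_{i-1} - z·r_i - 1 : 0 ≤ z ≤ Z_i - 1}`
for `1 ≤ i ≤ t-1` and `G_t(p,q) = {r_{t-1} - z·r_t - 1 : 0 ≤ z ≤ Z_t - 2}
= {1,…,r_{t-1}-1}`; moreover `#G(p,q) = Σ_{i=1}^t ⌊r_{i-1}/r_i⌋ - 1`. -/
theorem stmt_18 (p q : ℕ) (hp : 3 ≤ p) (hpq : p < q) (hcop : Nat.Coprime p q)
    (Q : Polynomial ℤ)
    (hQ : Q * ((1 - X ^ p) * (1 - X ^ q)) = (1 - X ^ (p * q)) * (1 - X))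
    (t : ℕ) (ht : 1 ≤ t) (r Z : ℕ → ℕ)
    (hr0 : r 0 = p) (hr1 : r 1 = q % p)
    (hrec : ∀ i, 1 ≤ i → i ≤ t → r (i - 1) = Z i * r i + r (i + 1) ∧ r (i + 1) < r i)
    (hrt : r t = 1) :
    {d : ℕ | ∃ a b : ℕ, a ∈ Q.support ∧ b ∈ Q.support ∧ a < b ∧
        (∀ c ∈ Q.support, ¬ (a < c ∧ c < b)) ∧ d = b - a} =
      (⋃ i ∈ Set.Icc 1 (t - 1),
        {d : ℕ | ∃ z : ℕ, z ≤ Z i - 1 ∧ d = r (i - 1) - z * r i - 1}) ∪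
      {d : ℕ | ∃ z : ℕ, z ≤ Z t - 2 ∧ d = r (t - 1) - z * r t - 1} ∧
    {d : ℕ | ∃ z : ℕ, z ≤ Z t - 2 ∧ d = r (t - 1) - z * r t - 1} =
      Set.Icc 1 (r (t - 1) - 1) ∧
    Set.ncard {d : ℕ | ∃ a b : ℕ, a ∈ Q.support ∧ b ∈ Q.support ∧ a < b ∧
        (∀ c ∈ Q.support, ¬ (a < c ∧ c < b)) ∧ d = b - a} =
      (∑ i ∈ Finset.Icc 1 t, r (i - 1) / r i) - 1 := by
  exact stmt_18_general p q (by omega) hpq hcop Q hQ t ht r Z hr0 hr1 hrec hrt
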